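/- For every L_⊳-formula φ: φ ∈ ICK ⊕ ((p ∧ (p ⊳ q)) → q) ⊕ (((p ⊳ q) ∧ (q ⊳ r)) → (p ⊳ r)) if and only if φ is valid on every conditional Kripke frame (X, ≤, 𝓡) satisfying, for all worlds x ∈ X and all upsets a, b: x ∈ a implies x ∈ ↑(R_a[x]), and R_a[x] ⊆ b implies R_a[x] ⊆ ↑(R_b[x]). -/

import Mathlib

/-! ## The conditional language `L_⊳` -/

/-- Formulas of the conditional language `L_⊳`, with proposition letters
indexed by the countable set `ℕ`. -/
inductive CForm : Type where
  | var : ℕ → CForm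
  | bot : CForm
  | and : CForm → CForm → CForm
  | or : CForm → CForm → CForm
  | imp : CForm → CForm → CForm
  | cond : CForm → CForm → CForm

/-- `⊤ := ⊥ → ⊥`. -/
def cTop : CForm := CForm.imp CForm.bot CForm.bot

/-- `φ ↔ ψ := (φ → ψ) ∧ (ψ → φ)`. -/
def cIff (φ ψ : CForm) : CForm := CForm.and (CForm.imp φ ψ) (CForm.imp ψ φ)

/-- Uniform substitution of formulas for proposition letters. -/
def psubst (σ : ℕ → CForm) : CForm → CForm
  | CForm.var q => σ q
  | CForm.bot => CForm.bot
  | CForm.and φ ψ => CForm.and (psubst σ φ) (psubst σ ψ)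
  | CForm.or φ ψ => CForm.or (psubst σ φ) (psubst σ ψ)
  | CForm.imp φ ψ => CForm.imp (psubst σ φ) (psubst σ ψ)
  | CForm.cond φ ψ => CForm.cond (psubst σ φ) (psubst σ ψ)

/-- The logic `ICK ⊕ Γ`: the smallest set of `L_⊳`-formulas containing an
axiomatisation of intuitionistic propositional logic, the formulas of `Γ`, the
axioms `(k_c)` and `(n_c)`, closed under uniform substitution, modus ponens and
the two congruence rules. -/
inductive ICK (Γ : Set CForm) : CForm → Prop where
  | prem {φ : CForm} : φ ∈ Γ → ICK Γ φ
  | a1 : ICK Γ (CForm.imp (CForm.and (CForm.var 0) (CForm.var 1)) (CForm.var 0))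
  | a2 : ICK Γ (CForm.imp (CForm.and (CForm.var 0) (CForm.var 1)) (CForm.var 1))
  | a3 : ICK Γ (CForm.imp (CForm.imp (CForm.var 0) (CForm.var 1))
      (CForm.imp (CForm.imp (CForm.var 0) (CForm.var 2))
        (CForm.imp (CForm.var 0) (CForm.and (CForm.var 1) (CForm.var 2)))))
  | a4 : ICK Γ (CForm.imp (CForm.var 0) (CForm.or (CForm.var 0) (CForm.var 1)))
  | a5 : ICK Γ (CForm.imp (CForm.var 1) (CForm.or (CForm.var 0) (CForm.var 1)))
  | a6 : ICK Γ (CForm.imp (CForm.imp (CForm.var 0) (CForm.var 2))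
      (CForm.imp (CForm.imp (CForm.var 1) (CForm.var 2))
        (CForm.imp (CForm.or (CForm.var 0) (CForm.var 1)) (CForm.var 2))))
  | a7 : ICK Γ (CForm.imp CForm.bot (CForm.var 0))
  | a8 : ICK Γ (CForm.imp (CForm.var 0) (CForm.imp (CForm.var 1) (CForm.var 0)))
  | a9 : ICK Γ (CForm.imp
      (CForm.imp (CForm.var 0) (CForm.imp (CForm.var 1) (CForm.var 2)))
      (CForm.imp (CForm.imp (CForm.var 0) (CForm.var 1))
        (CForm.imp (CForm.var 0) (CForm.var 2))))
  | kc : ICK Γ (cIff (CForm.cond (CForm.var 0) (CForm.and (CForm.var 1) (CForm.var 2)))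
      (CForm.and (CForm.cond (CForm.var 0) (CForm.var 1))
        (CForm.cond (CForm.var 0) (CForm.var 2))))
  | nc : ICK Γ (cIff (CForm.cond (CForm.var 0) cTop) cTop)
  | subst {φ : CForm} (σ : ℕ → CForm) : ICK Γ φ → ICK Γ (psubst σ φ)
  | mp {φ ψ : CForm} : ICK Γ (CForm.imp φ ψ) → ICK Γ φ → ICK Γ ψ
  | congL {φ ψ χ : CForm} :
      ICK Γ (cIff φ ψ) → ICK Γ (cIff (CForm.cond φ χ) (CForm.cond ψ χ))
  | congR {φ ψ χ : CForm} :
      ICK Γ (cIff φ ψ) → ICK Γ (cIff (CForm.cond χ φ) (CForm.cond χ ψ))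

/-! ## Conditional Kripke frames and semantics -/

/-- `a` is an upset (upward closed set) w.r.t. the relation `le`. -/
def IsUpset {X : Type} (le : X → X → Prop) (a : Set X) : Prop :=
  ∀ ⦃x y : X⦄, le x y → x ∈ a → y ∈ a

/-- The upward closure `↑s` of a set `s` w.r.t. the relation `le`. -/
def upCl {X : Type} (le : X → X → Prop) (s : Set X) : Set X :=
  {z | ∃ y ∈ s, le y z}

/-- Truth sets of `L_⊳`-formulas, by intuitionistic Kripke semantics for the
propositional connectives, where `x ⊨ φ ⊳ ψ` iff every `y` with
`x R_{V(φ)} y` satisfies `ψ` (here `V(φ)` is the truth set of `φ`). -/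
def csat {X : Type} (le : X → X → Prop) (R : Set X → X → X → Prop)
    (V : ℕ → Set X) : CForm → Set X
  | CForm.var p => V p
  | CForm.bot => ∅
  | CForm.and φ ψ => csat le R V φ ∩ csat le R V ψ
  | CForm.or φ ψ => csat le R V φ ∪ csat le R V ψ
  | CForm.imp φ ψ => {x | ∀ y, le x y → y ∈ csat le R V φ → y ∈ csat le R V ψ}
  | CForm.cond φ ψ => {x | ∀ y, R (csat le R V φ) x y → y ∈ csat le R V ψ}

/-- A conditional Kripke frame: a nonempty preordered set `(X, le)` with a
family of relations `R a` (indexed by the upsets `a`) satisfying the coherence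
condition `(≤ ∘ R_a) ⊆ (R_a ∘ ≤)`. -/
structure CondFrame where
  X : Type
  ne : Nonempty X
  le : X → X → Prop
  le_refl : ∀ x, le x x
  le_trans : ∀ ⦃x y z⦄, le x y → le y z → le x z
  R : Set X → X → X → Prop
  coh : ∀ a : Set X, IsUpset le a →
    ∀ ⦃x y z⦄, le x y → R a y z → ∃ w, R a x w ∧ le w z

/-- Validity on a conditional Kripke frame: truth at every world under every
valuation of the proposition letters by upsets. -/
def CondFrame.valid (F : CondFrame) (φ : CForm) : Prop :=
  ∀ V : ℕ → Set F.X, (∀ p, IsUpset F.le (V p)) → ∀ x, x ∈ csat F.le F.R V φ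

/-! ## Conditional Heyting algebras -/

/-- A conditional Heyting algebra: a Heyting algebra with a binary operation
`cond` (written `⊳` in the paper) preserving finite meets in its second
argument. -/
class CondHeyting (A : Type) extends HeytingAlgebra A where
  cond : A → A → A
  cond_inf : ∀ a b c : A, cond a (b ⊓ c) = cond a b ⊓ cond a c
  cond_top : ∀ a : A, cond a ⊤ = ⊤

/-- Evaluation of an `L_⊳`-formula in a conditional Heyting algebra under an
assignment `σ` of the proposition letters. -/
def evalCHA {A : Type} [CondHeyting A] (σ : ℕ → A) : CForm → A
  | CForm.var p => σ p
  | CForm.bot => ⊥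
  | CForm.and φ ψ => evalCHA σ φ ⊓ evalCHA σ ψ
  | CForm.or φ ψ => evalCHA σ φ ⊔ evalCHA σ ψ
  | CForm.imp φ ψ => evalCHA σ φ ⇨ evalCHA σ ψ
  | CForm.cond φ ψ => CondHeyting.cond (evalCHA σ φ) (evalCHA σ ψ)

/-- A formula is satisfied in a conditional Heyting algebra if it evaluates to
`⊤` under every assignment. -/
def chaSat (A : Type) [CondHeyting A] (φ : CForm) : Prop :=
  ∀ σ : ℕ → A, evalCHA σ φ = ⊤

/-- A prime filter: a proper, nonempty, upward closed subset, closed under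
binary meets, such that `a ⊔ b ∈ x` implies `a ∈ x` or `b ∈ x`. -/
def IsPrimeFilter {A : Type} [Lattice A] (x : Set A) : Prop :=
  x.Nonempty ∧ x ≠ Set.univ ∧
  (∀ ⦃a b : A⦄, a ∈ x → a ≤ b → b ∈ x) ∧
  (∀ ⦃a b : A⦄, a ∈ x → b ∈ x → a ⊓ b ∈ x) ∧
  (∀ ⦃a b : A⦄, a ⊔ b ∈ x → a ∈ x ∨ b ∈ x)

/-! ## General conditional frames -/

/-- A general conditional frame `(X, ≤, 𝓡, A)`. -/
structure GenFrame where
  X : Type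
  le : X → X → Prop
  le_refl : ∀ x, le x x
  le_trans : ∀ ⦃x y z⦄, le x y → le y z → le x z
  le_antisymm : ∀ ⦃x y⦄, le x y → le y x → x = y
  A : Set (Set X)
  upA : ∀ a ∈ A, IsUpset le a
  univ_mem : Set.univ ∈ A
  empty_mem : ∅ ∈ A
  inter_mem : ∀ a ∈ A, ∀ b ∈ A, a ∩ b ∈ A
  union_mem : ∀ a ∈ A, ∀ b ∈ A, a ∪ b ∈ A
  R : Set X → X → X → Prop
  himp_mem : ∀ a ∈ A, ∀ b ∈ A, {x | ∀ y, le x y → y ∈ a → y ∈ b} ∈ A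
  cimp_mem : ∀ a ∈ A, ∀ b ∈ A, {x | ∀ y, R a x y → y ∈ b} ∈ A
  coh : ∀ a ∈ A, ∀ ⦃x y z⦄, le x y → R a y z → ∃ w, R a x w ∧ le w z

/-- The carrier of the complex algebra of a general frame: the admissible
upsets. -/
def GenFrame.AUp (G : GenFrame) : Type := {a : Set G.X // a ∈ G.A}

instance GenFrame.instLatticeAUp (G : GenFrame) : Lattice G.AUp where
  le a b := a.val ⊆ b.val
  le_refl a := subset_rfl
  le_trans a b c h h' := Set.Subset.trans h h'
  le_antisymm a b h h' := Subtype.ext (subset_antisymm h h')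
  sup a b := ⟨a.val ∪ b.val, G.union_mem _ a.2 _ b.2⟩
  le_sup_left a b := Set.subset_union_left
  le_sup_right a b := Set.subset_union_right
  sup_le a b c h h' := Set.union_subset h h'
  inf a b := ⟨a.val ∩ b.val, G.inter_mem _ a.2 _ b.2⟩
  inf_le_left a b := Set.inter_subset_left
  inf_le_right a b := Set.inter_subset_right
  le_inf a b c h h' := Set.subset_inter h h'

instance GenFrame.instHeytingAUp (G : GenFrame) : HeytingAlgebra G.AUp :=
  { GenFrame.instLatticeAUp G with
    top := ⟨Set.univ, G.univ_mem⟩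
    le_top := fun a => Set.subset_univ _
    bot := ⟨∅, G.empty_mem⟩
    bot_le := fun a => Set.empty_subset _
    himp := fun a b => ⟨{x | ∀ y, G.le x y → y ∈ a.val → y ∈ b.val},
      G.himp_mem _ a.2 _ b.2⟩
    compl := fun a => ⟨{x | ∀ y, G.le x y → y ∈ a.val → y ∈ (∅ : Set G.X)},
      G.himp_mem _ a.2 _ G.empty_mem⟩
    le_himp_iff := by
      intro a b c
      show a.val ⊆ {x | ∀ y, G.le x y → y ∈ b.val → y ∈ c.val} ↔
        a.val ∩ b.val ⊆ c.val
      constructor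
      · rintro h x ⟨hxa, hxb⟩
        exact h hxa x (G.le_refl x) hxb
      · intro h x hxa y hle hyb
        exact h ⟨G.upA a.val a.2 hle hxa, hyb⟩
    himp_bot := fun a => rfl }

/-- The complex algebra `AUp(G)` of a general frame `G` is a conditional
Heyting algebra, with `a ⊳ b := {x | R_a[x] ⊆ b}`. -/
instance GenFrame.instCondHeytingAUp (G : GenFrame) : CondHeyting G.AUp where
  cond a b := ⟨{x | ∀ y, G.R a.val x y → y ∈ b.val}, G.cimp_mem _ a.2 _ b.2⟩
  cond_inf a b c := Subtype.ext (Set.ext fun x => by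
    show (∀ y, G.R a.val x y → y ∈ b.val ∩ c.val) ↔
      (∀ y, G.R a.val x y → y ∈ b.val) ∧ (∀ y, G.R a.val x y → y ∈ c.val)
    constructor
    · intro h
      exact ⟨fun y hy => (h y hy).1, fun y hy => (h y hy).2⟩
    · rintro ⟨h1, h2⟩ y hy
      exact ⟨h1 y hy, h2 y hy⟩)
  cond_top a := Subtype.ext (Set.ext fun x => by
    show (∀ y, G.R a.val x y → y ∈ (Set.univ : Set G.X)) ↔
      x ∈ (Set.univ : Set G.X)
    exact ⟨fun _ => trivial, fun _ y _ => trivial⟩)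

/-! ## Conditional Esakia spaces -/

/-- A conditional Esakia space: an Esakia space `(X, le, top)` together with a
family of relations `R a` indexed by the clopen upsets `a`, such that
`{x | R_a[x] ⊆ b}` is clopen for clopen upsets `a, b`, each `R_a[x]` is
closed, and `(≤ ∘ R_a ∘ ≤) = R_a`. -/
structure CondEsakia where
  X : Type
  ne : Nonempty X
  le : X → X → Prop
  le_refl : ∀ x, le x x
  le_trans : ∀ ⦃x y z⦄, le x y → le y z → le x z
  le_antisymm : ∀ ⦃x y⦄, le x y → le y x → x = y
  top : TopologicalSpace X
  compact : @CompactSpace X top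
  sep : ∀ x y : X, ¬ le x y →
    ∃ a : Set X, @IsClopen X top a ∧ IsUpset le a ∧ x ∈ a ∧ y ∉ a
  down_clopen : ∀ a : Set X, @IsClopen X top a →
    @IsClopen X top {x | ∃ y ∈ a, le x y}
  R : Set X → X → X → Prop
  box_clopen : ∀ a b : Set X, @IsClopen X top a → IsUpset le a →
    @IsClopen X top b → IsUpset le b →
    @IsClopen X top {x | ∀ y, R a x y → y ∈ b}
  coh : ∀ a : Set X, @IsClopen X top a → IsUpset le a →
    ∀ x z : X, (∃ x' y', le x x' ∧ R a x' y' ∧ le y' z) ↔ R a x z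
  im_closed : ∀ a : Set X, @IsClopen X top a → IsUpset le a →
    ∀ x : X, @IsClosed X top {y | R a x y}

/-- `a` is a clopen upset of the conditional Esakia space `S`. -/
def CondEsakia.ClopUp (S : CondEsakia) (a : Set S.X) : Prop :=
  @IsClopen S.X S.top a ∧ IsUpset S.le a

/-- Validity on a conditional Esakia space: truth at every world under every
valuation of the proposition letters by clopen upsets. -/
def CondEsakia.valid (S : CondEsakia) (φ : CForm) : Prop :=
  ∀ V : ℕ → Set S.X, (∀ p, S.ClopUp (V p)) → ∀ x, x ∈ csat S.le S.R V φ

/-- The family of relations of the empty fill-in `κ_∅(S)`: it agrees with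
`S.R` on clopen upsets and is empty on all other sets. -/
def CondEsakia.emptyFill (S : CondEsakia) : Set S.X → S.X → S.X → Prop :=
  fun a x y => S.ClopUp a ∧ S.R a x y

/-- Validity on the empty fill-in `κ_∅(S)`, a conditional Kripke frame:
truth at every world under every valuation by (arbitrary) upsets. -/
def CondEsakia.emptyFillValid (S : CondEsakia) (φ : CForm) : Prop :=
  ∀ V : ℕ → Set S.X, (∀ p, IsUpset S.le (V p)) →
    ∀ x, x ∈ csat S.le S.emptyFill V φ

/-! ## The modal language `L_□` -/

/-- Formulas of the modal language `L_□`. -/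
inductive MForm : Type where
  | var : ℕ → MForm
  | bot : MForm
  | and : MForm → MForm → MForm
  | or : MForm → MForm → MForm
  | imp : MForm → MForm → MForm
  | box : MForm → MForm

/-- The translation `(−)^p : L_□ → L_⊳`: it fixes proposition letters, `⊥`,
`∧`, `∨`, `→`, and sends `□ψ` to `p ⊳ ψ^p`. -/
def MForm.transl (p : ℕ) : MForm → CForm
  | MForm.var q => CForm.var q
  | MForm.bot => CForm.bot
  | MForm.and φ ψ => CForm.and (φ.transl p) (ψ.transl p)
  | MForm.or φ ψ => CForm.or (φ.transl p) (ψ.transl p)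
  | MForm.imp φ ψ => CForm.imp (φ.transl p) (ψ.transl p)
  | MForm.box φ => CForm.cond (CForm.var p) (φ.transl p)

/-- The proposition letter `p` occurs (as a subformula) in a modal formula. -/
def MForm.occurs (p : ℕ) : MForm → Prop
  | MForm.var q => p = q
  | MForm.bot => False
  | MForm.and φ ψ => φ.occurs p ∨ ψ.occurs p
  | MForm.or φ ψ => φ.occurs p ∨ ψ.occurs p
  | MForm.imp φ ψ => φ.occurs p ∨ ψ.occurs p
  | MForm.box φ => φ.occurs p

/-- Truth sets of `L_□`-formulas in a modal model, by intuitionistic Kripke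
semantics with `x ⊨ □φ` iff every `y` with `x R y` satisfies `φ`. -/
def msat {X : Type} (le : X → X → Prop) (R : X → X → Prop)
    (V : ℕ → Set X) : MForm → Set X
  | MForm.var p => V p
  | MForm.bot => ∅
  | MForm.and φ ψ => msat le R V φ ∩ msat le R V ψ
  | MForm.or φ ψ => msat le R V φ ∪ msat le R V ψ
  | MForm.imp φ ψ => {x | ∀ y, le x y → y ∈ msat le R V φ → y ∈ msat le R V ψ}
  | MForm.box φ => {x | ∀ y, R x y → y ∈ msat le R V φ}

/-- A modal Esakia space: an Esakia space with a relation `R` such that each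
`R[x]` is closed and `R = (≤ ∘ R ∘ ≤)`. -/
structure ModalEsakia where
  X : Type
  ne : Nonempty X
  le : X → X → Prop
  le_refl : ∀ x, le x x
  le_trans : ∀ ⦃x y z⦄, le x y → le y z → le x z
  le_antisymm : ∀ ⦃x y⦄, le x y → le y x → x = y
  top : TopologicalSpace X
  compact : @CompactSpace X top
  sep : ∀ x y : X, ¬ le x y →
    ∃ a : Set X, @IsClopen X top a ∧ IsUpset le a ∧ x ∈ a ∧ y ∉ a
  down_clopen : ∀ a : Set X, @IsClopen X top a →
    @IsClopen X top {x | ∃ y ∈ a, le x y}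
  R : X → X → Prop
  im_closed : ∀ x : X, @IsClosed X top {y | R x y}
  coh : ∀ x z : X, (∃ x' y', le x x' ∧ R x' y' ∧ le y' z) ↔ R x z

/-- Validity on a modal Esakia space: truth everywhere under every valuation
by clopen upsets. -/
def ModalEsakia.valid (M : ModalEsakia) (φ : MForm) : Prop :=
  ∀ V : ℕ → Set M.X, (∀ p, @IsClopen M.X M.top (V p) ∧ IsUpset M.le (V p)) →
    ∀ x, x ∈ msat M.le M.R V φ

/-- Validity on the underlying modal frame `κ(M)` of a modal Esakia space:
truth everywhere under every valuation by arbitrary upsets. -/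
def ModalEsakia.frameValid (M : ModalEsakia) (φ : MForm) : Prop :=
  ∀ V : ℕ → Set M.X, (∀ p, IsUpset M.le (V p)) → ∀ x, x ∈ msat M.le M.R V φ

/-- An `L_□`-formula is d-persistent if its validity on a modal Esakia space
implies its validity on the underlying modal frame. -/
def DPersistent (φ : MForm) : Prop :=
  ∀ M : ModalEsakia, M.valid φ → M.frameValid φ

/-- The axiom `(mp)  (p ∧ (p ⊳ q)) → q`. -/
def axMp : CForm :=
  CForm.imp (CForm.and (CForm.var 0) (CForm.cond (CForm.var 0) (CForm.var 1)))
    (CForm.var 1)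

/-- The transitivity axiom `(tr)  ((p ⊳ q) ∧ (q ⊳ r)) → (p ⊳ r)`. -/
def axTr : CForm :=
  CForm.imp (CForm.and (CForm.cond (CForm.var 0) (CForm.var 1))
      (CForm.cond (CForm.var 1) (CForm.var 2)))
    (CForm.cond (CForm.var 0) (CForm.var 2))

/-! Soundness is an induction on derivations. For completeness, the canonical frame has the prime
theories as its worlds, but its relations `R_a` are determined only for the sets `a` of the form
`{x | φ ∈ x}`, where we write `R_φ`. They have to be filled in on all other upsets so that both
frame conditions hold: `R_b[x]` is made to contain every `z ≥ x` in `b`, which takes care of the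
first condition, and every set `R_φ[y] ⊆ b` with `x ≤ y`, as the second one and coherence demand. By (mp) and (tr) themselves, this adds
nothing to `R_b` when `b` already comes from a formula, so the truth lemma survives. -/

/-! ### Soundness -/

section Soundness

variable {F : CondFrame} {φ ψ : CForm}

theorem CondFrame.isUpset_csat (F : CondFrame) {V : ℕ → Set F.X} (hV : ∀ p, IsUpset F.le (V p))
    (φ : CForm) : IsUpset F.le (csat F.le F.R V φ) := by
  induction φ with
  | var p => exact hV p
  | bot => exact fun _ _ _ hx => hx
  | and φ ψ ihφ ihψ => exact fun _ _ hxy hx => ⟨ihφ hxy hx.1, ihψ hxy hx.2⟩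
  | or φ ψ ihφ ihψ => exact fun _ _ hxy hx => hx.imp (ihφ hxy) (ihψ hxy)
  | imp φ ψ => exact fun _ _ hxy hx z hyz => hx z (F.le_trans hxy hyz)
  | cond φ ψ ihφ ihψ =>
    intro x y hxy hx z hyz
    obtain ⟨w, hxw, hwz⟩ := F.coh _ ihφ hxy hyz
    exact ihψ hwz (hx w hxw)

theorem csat_psubst {X : Type} (le : X → X → Prop) (R : Set X → X → X → Prop) (V : ℕ → Set X)
    (σ : ℕ → CForm) (φ : CForm) :
    csat le R V (psubst σ φ) = csat le R (fun p => csat le R V (σ p)) φ := by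
  induction φ with
  | var | bot => rfl
  | and _ _ ihφ ihψ | or _ _ ihφ ihψ | imp _ _ ihφ ihψ | cond _ _ ihφ ihψ =>
    simp only [psubst, csat, ihφ, ihψ]

theorem CondFrame.valid.psubst (h : F.valid φ) (σ : ℕ → CForm) : F.valid (psubst σ φ) := by
  intro V hV x
  rw [csat_psubst]
  exact h _ (fun p => F.isUpset_csat hV (σ p)) x

theorem CondFrame.valid_imp_iff :
    F.valid (φ.imp ψ) ↔ ∀ V : ℕ → Set F.X, (∀ p, IsUpset F.le (V p)) →
      csat F.le F.R V φ ⊆ csat F.le F.R V ψ :=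
  ⟨fun h V hV x hx => h V hV x x (F.le_refl x) hx, fun h V hV _ _ _ hy => h V hV hy⟩

theorem CondFrame.valid_cIff_iff :
    F.valid (cIff φ ψ) ↔ ∀ V : ℕ → Set F.X, (∀ p, IsUpset F.le (V p)) →
      csat F.le F.R V φ = csat F.le F.R V ψ := by
  have hand : F.valid (cIff φ ψ) ↔ F.valid (φ.imp ψ) ∧ F.valid (ψ.imp φ) :=
    ⟨fun h => ⟨fun V hV x => (h V hV x).1, fun V hV x => (h V hV x).2⟩,
      fun h V hV x => ⟨h.1 V hV x, h.2 V hV x⟩⟩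
  simp only [hand, valid_imp_iff, Set.Subset.antisymm_iff, ← forall_and]

theorem ICK.valid {Γ : Set CForm} (hΓ : ∀ ψ ∈ Γ, F.valid ψ) (h : ICK Γ φ) : F.valid φ := by
  induction h with
  | prem h => exact hΓ _ h
  | a1 => exact F.valid_imp_iff.2 fun _ _ => Set.inter_subset_left
  | a2 => exact F.valid_imp_iff.2 fun _ _ => Set.inter_subset_right
  | a3 =>
    exact F.valid_imp_iff.2 fun _ _ _ h₁ _ hy h₂ z hz h₀ =>
      ⟨h₁ z (F.le_trans hy hz) h₀, h₂ z hz h₀⟩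
  | a4 => exact F.valid_imp_iff.2 fun _ _ => Set.subset_union_left
  | a5 => exact F.valid_imp_iff.2 fun _ _ => Set.subset_union_right
  | a6 =>
    exact F.valid_imp_iff.2 fun _ _ _ h₀ _ hy h₁ z hz h =>
      h.elim (h₀ z (F.le_trans hy hz)) (h₁ z hz)
  | a7 => exact F.valid_imp_iff.2 fun _ _ => Set.empty_subset _
  | a8 => exact F.valid_imp_iff.2 fun _ hV _ h₀ _ hy _ => hV 0 hy h₀
  | a9 =>
    exact F.valid_imp_iff.2 fun _ _ _ h₁ _ hy h₂ z hz h₀ =>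
      h₁ z (F.le_trans hy hz) h₀ z (F.le_refl z) (h₂ z hz h₀)
  | kc =>
    exact F.valid_cIff_iff.2 fun _ _ => Set.ext fun _ =>
      ⟨fun h => ⟨fun y hy => (h y hy).1, fun y hy => (h y hy).2⟩,
        fun h y hy => ⟨h.1 y hy, h.2 y hy⟩⟩
  | nc =>
    exact F.valid_cIff_iff.2 fun _ _ => Set.ext fun _ =>
      ⟨fun _ _ _ hbot => hbot, fun _ _ _ _ _ hbot => hbot⟩
  | subst σ _ ih => exact ih.psubst σ
  | mp _ _ ihimp ih => exact fun V hV _ => F.valid_imp_iff.1 ihimp V hV (ih V hV _)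
  | congL _ ih | congR _ ih =>
    exact F.valid_cIff_iff.2 fun V hV => by simp only [csat, F.valid_cIff_iff.1 ih V hV]

theorem CondFrame.valid_axMp
    (hF : ∀ (x : F.X) (a : Set F.X), IsUpset F.le a → x ∈ a → x ∈ upCl F.le {y | F.R a x y}) :
    F.valid axMp := by
  refine F.valid_imp_iff.2 fun V hV x ⟨hp, hpq⟩ => ?_
  obtain ⟨y, hxy, hyx⟩ := hF x (V 0) (hV 0) hp
  exact hV 1 hyx (hpq y hxy)

theorem CondFrame.valid_axTr
    (hF : ∀ (x : F.X) (a b : Set F.X), IsUpset F.le a → IsUpset F.le b →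
      {y | F.R a x y} ⊆ b → {y | F.R a x y} ⊆ upCl F.le {y | F.R b x y}) :
    F.valid axTr := by
  refine F.valid_imp_iff.2 fun V hV x ⟨hpq, hqr⟩ y hxy => ?_
  obtain ⟨z, hxz, hzy⟩ := hF x (V 0) (V 1) (hV 0) (hV 1) hpq hxy
  exact hV 2 hzy (hqr z hxz)

end Soundness

/-! ### Theories -/

/-- A theory of the logic `ICK ⊕ Γ`: a set of formulas containing the logic and closed under
modus ponens. -/
structure IsTheory (Γ T : Set CForm) : Prop where
  mem_of_ICK : ∀ {φ : CForm}, ICK Γ φ → φ ∈ T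
  mp : ∀ {φ ψ : CForm}, φ.imp ψ ∈ T → φ ∈ T → ψ ∈ T

/-- The substitution `p₀, p₁, p₂ ↦ φ, ψ, χ` that instantiates an axiom. The letters beyond `p₂`,
which occur in no axiom, are sent to `χ` as well. -/
def substThree (φ ψ χ : CForm) : ℕ → CForm
  | 0 => φ
  | 1 => ψ
  | _ => χ

theorem isTheory_setOf_ICK (Γ : Set CForm) : IsTheory Γ {φ | ICK Γ φ} :=
  ⟨id, ICK.mp⟩

namespace IsTheory

variable {Γ T : Set CForm} {φ ψ χ : CForm}

section Propositional

theorem imp_mem_of_mem (hT : IsTheory Γ T) (φ : CForm) (h : ψ ∈ T) : φ.imp ψ ∈ T :=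
  hT.mp (hT.mem_of_ICK (ICK.a8.subst (substThree ψ φ φ))) h

theorem imp_mp (hT : IsTheory Γ T) (h : φ.imp (ψ.imp χ) ∈ T) (h' : φ.imp ψ ∈ T) :
    φ.imp χ ∈ T :=
  hT.mp (hT.mp (hT.mem_of_ICK (ICK.a9.subst (substThree φ ψ χ))) h) h'

theorem imp_self_mem (hT : IsTheory Γ T) (φ : CForm) : φ.imp φ ∈ T :=
  hT.imp_mp (ψ := φ.imp φ) (hT.mem_of_ICK (ICK.a8.subst (substThree φ (φ.imp φ) φ)))
    (hT.mem_of_ICK (ICK.a8.subst (substThree φ φ φ)))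

/-- By the deduction theorem, this is the theory generated by `T` and `φ`. -/
theorem setOf_imp_mem (hT : IsTheory Γ T) (φ : CForm) : IsTheory Γ {ψ | φ.imp ψ ∈ T} :=
  ⟨fun h => hT.imp_mem_of_mem φ (hT.mem_of_ICK h), hT.imp_mp⟩

theorem and_mem_iff (hT : IsTheory Γ T) : φ.and ψ ∈ T ↔ φ ∈ T ∧ ψ ∈ T := by
  refine ⟨fun h => ⟨?_, ?_⟩, fun ⟨hφ, hψ⟩ => ?_⟩
  · exact hT.mp (hT.mem_of_ICK (ICK.a1.subst (substThree φ ψ ψ))) h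
  · exact hT.mp (hT.mem_of_ICK (ICK.a2.subst (substThree φ ψ ψ))) h
  · have hpair : (φ.imp φ).imp ((φ.imp ψ).imp (φ.imp (φ.and ψ))) ∈ T :=
      hT.mem_of_ICK (ICK.a3.subst (substThree φ φ ψ))
    exact hT.mp (hT.mp (hT.mp hpair (hT.imp_self_mem φ)) (hT.imp_mem_of_mem φ hψ)) hφ

theorem or_mem_of_left (hT : IsTheory Γ T) (ψ : CForm) (h : φ ∈ T) : φ.or ψ ∈ T :=
  hT.mp (hT.mem_of_ICK (ICK.a4.subst (substThree φ ψ ψ))) h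

theorem or_mem_of_right (hT : IsTheory Γ T) (φ : CForm) (h : ψ ∈ T) : φ.or ψ ∈ T :=
  hT.mp (hT.mem_of_ICK (ICK.a5.subst (substThree φ ψ ψ))) h

theorem or_elim (hT : IsTheory Γ T) (h : φ.or ψ ∈ T) (hφ : φ.imp χ ∈ T) (hψ : ψ.imp χ ∈ T) :
    χ ∈ T :=
  hT.mp (hT.mp (hT.mp (hT.mem_of_ICK (ICK.a6.subst (substThree φ ψ χ))) hφ) hψ) h

theorem mem_of_bot_mem (hT : IsTheory Γ T) (φ : CForm) (h : CForm.bot ∈ T) : φ ∈ T :=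
  hT.mp (hT.mem_of_ICK (ICK.a7.subst (substThree φ φ φ))) h

theorem mem_iff_of_cIff_mem (hT : IsTheory Γ T) (h : cIff φ ψ ∈ T) : φ ∈ T ↔ ψ ∈ T :=
  ⟨hT.mp (hT.and_mem_iff.1 h).1, hT.mp (hT.and_mem_iff.1 h).2⟩

end Propositional

section Conditional

theorem cond_mem_congr_left (hT : IsTheory Γ T) (χ : CForm) (h : ICK Γ (cIff φ ψ)) :
    φ.cond χ ∈ T ↔ ψ.cond χ ∈ T :=
  hT.mem_iff_of_cIff_mem (hT.mem_of_ICK h.congL)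

theorem cond_mem_congr_right (hT : IsTheory Γ T) (χ : CForm) (h : ICK Γ (cIff φ ψ)) :
    χ.cond φ ∈ T ↔ χ.cond ψ ∈ T :=
  hT.mem_iff_of_cIff_mem (hT.mem_of_ICK h.congR)

theorem cond_and_mem_iff (hT : IsTheory Γ T) :
    φ.cond (ψ.and χ) ∈ T ↔ φ.cond ψ ∈ T ∧ φ.cond χ ∈ T :=
  (hT.mem_iff_of_cIff_mem (hT.mem_of_ICK (ICK.kc.subst (substThree φ ψ χ)))).trans
    hT.and_mem_iff

theorem cond_top_mem (hT : IsTheory Γ T) (φ : CForm) : φ.cond cTop ∈ T :=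
  (hT.mem_iff_of_cIff_mem (hT.mem_of_ICK (ICK.nc.subst (substThree φ φ φ)))).2
    (hT.imp_self_mem CForm.bot)

theorem cond_mem_of_ICK (hT : IsTheory Γ T) (φ : CForm) (h : ICK Γ ψ) : φ.cond ψ ∈ T := by
  have hL := isTheory_setOf_ICK Γ
  have htop : ICK Γ (cIff cTop ψ) :=
    hL.and_mem_iff.2 ⟨hL.imp_mem_of_mem _ h, hL.imp_mem_of_mem _ (hL.imp_self_mem _)⟩
  exact (hT.cond_mem_congr_right φ htop).1 (hT.cond_top_mem φ)

theorem cond_mem_mono (hT : IsTheory Γ T) (hψχ : ICK Γ (ψ.imp χ)) (h : φ.cond ψ ∈ T) :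
    φ.cond χ ∈ T := by
  have hL := isTheory_setOf_ICK Γ
  have hand : ICK Γ (cIff ψ (ψ.and χ)) :=
    hL.and_mem_iff.2 ⟨(hL.setOf_imp_mem ψ).and_mem_iff.2 ⟨hL.imp_self_mem ψ, hψχ⟩,
      ICK.a1.subst (substThree ψ χ χ)⟩
  exact (hT.cond_and_mem_iff.1 ((hT.cond_mem_congr_right φ hand).1 h)).2

theorem setOf_cond_mem (hT : IsTheory Γ T) (φ : CForm) : IsTheory Γ {ψ | φ.cond ψ ∈ T} := by
  refine ⟨hT.cond_mem_of_ICK φ, fun {ψ χ} himp hψ => ?_⟩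
  have hmp : ICK Γ (((ψ.imp χ).and ψ).imp χ) := by
    have hL := isTheory_setOf_ICK Γ
    have hU := hL.setOf_imp_mem ((ψ.imp χ).and ψ)
    obtain ⟨h₁, h₂⟩ := hU.and_mem_iff.1 (hL.imp_self_mem _)
    exact hU.mp h₁ h₂
  exact hT.cond_mem_mono hmp (hT.cond_and_mem_iff.2 ⟨himp, hψ⟩)

theorem mem_of_cond_mem (hT : IsTheory Γ T) (hΓ : axMp ∈ Γ) (h : φ ∈ T) (h' : φ.cond ψ ∈ T) :
    ψ ∈ T :=
  hT.mp (hT.mem_of_ICK ((ICK.prem hΓ).subst (substThree φ ψ ψ))) (hT.and_mem_iff.2 ⟨h, h'⟩)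

theorem cond_mem_trans (hT : IsTheory Γ T) (hΓ : axTr ∈ Γ) (h : φ.cond ψ ∈ T)
    (h' : ψ.cond χ ∈ T) : φ.cond χ ∈ T :=
  hT.mp (hT.mem_of_ICK ((ICK.prem hΓ).subst (substThree φ ψ χ))) (hT.and_mem_iff.2 ⟨h, h'⟩)

end Conditional

theorem sUnion {C : Set (Set CForm)} (hC : ∀ U ∈ C, IsTheory Γ U) (hne : C.Nonempty)
    (hdir : DirectedOn (· ⊆ ·) C) : IsTheory Γ (⋃₀ C) := by
  refine ⟨fun h => ?_, ?_⟩
  · obtain ⟨U, hU⟩ := hne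
    exact ⟨U, hU, (hC U hU).mem_of_ICK h⟩
  · rintro φ ψ ⟨U, hU, himp⟩ ⟨U', hU', hφ⟩
    obtain ⟨W, hW, hUW, hU'W⟩ := hdir U hU U' hU'
    exact ⟨W, hW, (hC W hW).mp (hUW himp) (hU'W hφ)⟩

end IsTheory

/-! ### Prime theories -/

/-- A prime theory of `ICK ⊕ Γ`: a consistent theory with the disjunction property. -/
structure IsPrimeTheory (Γ T : Set CForm) : Prop extends IsTheory Γ T where
  bot_notMem : CForm.bot ∉ T
  mem_or_mem : ∀ {φ ψ : CForm}, φ.or ψ ∈ T → φ ∈ T ∨ ψ ∈ T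

section Canonical

variable {Γ T : Set CForm} {φ ψ : CForm}

theorem isPrimeTheory_of_maximal (hT : Maximal (fun U => IsTheory Γ U ∧ φ ∉ U) T) :
    IsPrimeTheory Γ T := by
  obtain ⟨hTh, hφ⟩ := hT.prop
  have imp_mem_of_notMem : ∀ ψ, ψ ∉ T → ψ.imp φ ∈ T := by
    intro ψ hψ
    by_contra hψφ
    have hsub : {χ | ψ.imp χ ∈ T} ⊆ T :=
      hT.le_of_ge ⟨hTh.setOf_imp_mem ψ, hψφ⟩ fun _ => hTh.imp_mem_of_mem ψ
    exact hψ (hsub (hTh.imp_self_mem ψ))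
  refine ⟨hTh, fun h => hφ (hTh.mem_of_bot_mem φ h), fun {ψ χ} hor => ?_⟩
  by_contra! hcon
  exact hφ (hTh.or_elim hor (imp_mem_of_notMem ψ hcon.1) (imp_mem_of_notMem χ hcon.2))

/-- The worlds of the canonical frames, ordered by inclusion: the prime theories of `ICK ⊕ Γ`. -/
abbrev PrimeTheory (Γ : Set CForm) : Type := {T : Set CForm // IsPrimeTheory Γ T}

theorem IsTheory.exists_primeTheory (hT : IsTheory Γ T) (hφ : φ ∉ T) :
    ∃ x : PrimeTheory Γ, T ⊆ x.1 ∧ φ ∉ x.1 := by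
  obtain ⟨M, hTM, hM⟩ := zorn_subset_nonempty {U | IsTheory Γ U ∧ φ ∉ U} (fun C hC hchain hne =>
    ⟨⋃₀ C, ⟨sUnion (fun U hU => (hC hU).1) hne hchain.directedOn,
      fun ⟨U, hU, hφU⟩ => (hC hU).2 hφU⟩, fun _ => Set.subset_sUnion_of_mem⟩) T ⟨hT, hφ⟩
  exact ⟨⟨M, isPrimeTheory_of_maximal hM⟩, hTM, hM.prop.2⟩

/-! ### Canonical models -/

/-- The set of prime theories containing `φ`, the intended truth set of `φ` in a canonical
model. -/
def truthSet (Γ : Set CForm) (φ : CForm) : Set (PrimeTheory Γ) := {x | φ ∈ x.1}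

/-- The relation that interprets the conditionals with antecedent `φ` in a canonical model. -/
def canonicalRel (φ : CForm) (x y : PrimeTheory Γ) : Prop :=
  ∀ ⦃ψ : CForm⦄, φ.cond ψ ∈ x.1 → ψ ∈ y.1

theorem imp_mem_iff (x : PrimeTheory Γ) :
    φ.imp ψ ∈ x.1 ↔ ∀ y : PrimeTheory Γ, x ≤ y → φ ∈ y.1 → ψ ∈ y.1 := by
  refine ⟨fun h y hxy => y.2.mp (hxy h), fun h => ?_⟩
  by_contra hψ
  obtain ⟨y, hxy, hψy⟩ := (x.2.setOf_imp_mem φ).exists_primeTheory hψ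
  exact hψy (h y (fun _ hχ => hxy (x.2.imp_mem_of_mem φ hχ)) (hxy (x.2.imp_self_mem φ)))

theorem cond_mem_iff (x : PrimeTheory Γ) :
    φ.cond ψ ∈ x.1 ↔ ∀ y : PrimeTheory Γ, canonicalRel φ x y → ψ ∈ y.1 := by
  refine ⟨fun h y hxy => hxy h, fun h => ?_⟩
  by_contra hψ
  obtain ⟨y, hxy, hψy⟩ := (x.2.setOf_cond_mem φ).exists_primeTheory hψ
  exact hψy (h y hxy)

theorem ICK_iff_forall_primeTheory : ICK Γ φ ↔ ∀ x : PrimeTheory Γ, φ ∈ x.1 := by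
  refine ⟨fun h x => x.2.mem_of_ICK h, fun h => ?_⟩
  by_contra hφ
  obtain ⟨x, -, hφx⟩ := (isTheory_setOf_ICK Γ).exists_primeTheory hφ
  exact hφx (h x)

theorem ICK_cIff_of_truthSet_eq (h : truthSet Γ φ = truthSet Γ ψ) : ICK Γ (cIff φ ψ) :=
  ICK_iff_forall_primeTheory.2 fun x => x.2.and_mem_iff.2
    ⟨(imp_mem_iff x).2 fun _ _ hy => h.subset hy, (imp_mem_iff x).2 fun _ _ hy => h.superset hy⟩

theorem csat_eq_truthSet {R : Set (PrimeTheory Γ) → PrimeTheory Γ → PrimeTheory Γ → Prop}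
    (hR : ∀ φ x y, R (truthSet Γ φ) x y ↔ canonicalRel φ x y) (φ : CForm) :
    csat (· ≤ ·) R (fun p => truthSet Γ (CForm.var p)) φ = truthSet Γ φ := by
  induction φ with
  | var p => rfl
  | bot => exact Set.ext fun x => iff_of_false id x.2.bot_notMem
  | and φ ψ ihφ ihψ =>
    simp only [csat, ihφ, ihψ]
    exact Set.ext fun x => x.2.and_mem_iff.symm
  | or φ ψ ihφ ihψ =>
    simp only [csat, ihφ, ihψ]
    exact Set.ext fun x =>
      ⟨fun h => h.elim (x.2.or_mem_of_left ψ) (x.2.or_mem_of_right φ), x.2.mem_or_mem⟩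
  | imp φ ψ ihφ ihψ =>
    simp only [csat, ihφ, ihψ]
    exact Set.ext fun x => (imp_mem_iff x).symm
  | cond φ ψ ihφ ihψ =>
    simp only [csat, ihφ, ihψ, hR]
    exact Set.ext fun x => (cond_mem_iff x).symm

/-! ### The fill-in -/

/-- The fill-in of the canonical relations: the family `R_b`, for arbitrary sets `b` of worlds,
generated by the canonical relations and closed under what coherence and the frame conditions for
(mp) and (tr) require. -/
inductive FillRel (b : Set (PrimeTheory Γ)) (x z : PrimeTheory Γ) : Prop
  | canonical (φ : CForm) : b = truthSet Γ φ → canonicalRel φ x z → FillRel b x z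
  | transfer (φ : CForm) (y : PrimeTheory Γ) :
      x ≤ y → {w | canonicalRel φ y w} ⊆ b → canonicalRel φ y z → FillRel b x z
  | self : x ≤ z → z ∈ b → FillRel b x z

namespace FillRel

variable {a b : Set (PrimeTheory Γ)} {x y z : PrimeTheory Γ}

theorem of_le (hxy : x ≤ y) : FillRel a y z → FillRel a x z
  | canonical φ ha hyz => canonical φ ha fun _ h => hyz (hxy h)
  | transfer φ w hyw ha hwz => transfer φ w (hxy.trans hyw) ha hwz
  | self hyz hz => self (hxy.trans hyz) hz

theorem of_subset (hab : {w | FillRel a x w} ⊆ b) : FillRel a x z → FillRel b x z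
  | canonical φ ha hxz => transfer φ x le_rfl (fun _ hw => hab (canonical φ ha hw)) hxz
  | transfer φ y hxy ha hyz => transfer φ y hxy (fun _ hw => hab (transfer φ y hxy ha hw)) hyz
  | self hxz hz => self hxz (hab (self hxz hz))

end FillRel

theorem fillRel_truthSet_iff (hMp : axMp ∈ Γ) (hTr : axTr ∈ Γ) (φ : CForm)
    (x z : PrimeTheory Γ) : FillRel (truthSet Γ φ) x z ↔ canonicalRel φ x z := by
  refine ⟨fun h χ hχ => ?_, FillRel.canonical φ rfl⟩
  cases h with
  | canonical ψ hφψ hxz =>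
    exact hxz ((x.2.cond_mem_congr_left χ (ICK_cIff_of_truthSet_eq hφψ)).1 hχ)
  | transfer ψ y hxy hsub hyz =>
    have hψφ : ψ.cond φ ∈ y.1 := (cond_mem_iff y).2 fun w hw => hsub hw
    exact hyz (y.2.cond_mem_trans hTr hψφ (hxy hχ))
  | self hxz hz => exact z.2.mem_of_cond_mem hMp hz (hxz hχ)

/-- The canonical frame of `ICK ⊕ Γ` with the filled-in relations. -/
def fillFrame (Γ : Set CForm) [ne : Nonempty (PrimeTheory Γ)] : CondFrame where
  X := PrimeTheory Γ
  ne := ne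
  le := (· ≤ ·)
  le_refl := le_refl
  le_trans _ _ _ := le_trans
  R := FillRel
  coh _ _ _ _ z hxy hyz := ⟨z, hyz.of_le hxy, le_rfl⟩

theorem ICK_of_valid_fillFrame [Nonempty (PrimeTheory Γ)] (hMp : axMp ∈ Γ) (hTr : axTr ∈ Γ)
    (h : (fillFrame Γ).valid φ) : ICK Γ φ := by
  refine ICK_iff_forall_primeTheory.2 fun x => ?_
  have hx := h (fun p => truthSet Γ (CForm.var p)) (fun _ _ _ hxy hp => hxy hp) x
  exact (csat_eq_truthSet (fillRel_truthSet_iff hMp hTr) φ).subset hx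

end Canonical

/-- `ICK ⊕ (mp) ⊕ (tr)` is sound and complete with respect
to conditional Kripke frames satisfying, for all worlds `x` and upsets `a, b`:
`x ∈ a` implies `x ∈ ↑(R_a[x])`, and `R_a[x] ⊆ b` implies
`R_a[x] ⊆ ↑(R_b[x])`. -/
theorem ikri_completeness (φ : CForm) :
    ICK {axMp, axTr} φ ↔
      ∀ F : CondFrame,
        (∀ (x : F.X) (a b : Set F.X), IsUpset F.le a → IsUpset F.le b →
          ((x ∈ a → x ∈ upCl F.le {y | F.R a x y}) ∧
            ({y | F.R a x y} ⊆ b →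
              {y | F.R a x y} ⊆ upCl F.le {y | F.R b x y}))) →
        F.valid φ := by
  constructor
  · intro h F hF
    refine h.valid ?_
    rintro ψ (rfl | rfl)
    · exact F.valid_axMp fun x a ha => (hF x a a ha ha).1
    · exact F.valid_axTr fun x a b ha hb => (hF x a b ha hb).2
  · intro h
    rcases isEmpty_or_nonempty (PrimeTheory {axMp, axTr}) with hempty | hne
    · exact ICK_iff_forall_primeTheory.2 hempty.elim
    · refine ICK_of_valid_fillFrame (Or.inl rfl) (Or.inr rfl) (h (fillFrame {axMp, axTr}) ?_)
      intro x a b _ _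
      exact ⟨fun hx => ⟨x, .self le_rfl hx, le_rfl⟩,
        fun hab z hz => ⟨z, hz.of_subset hab, le_rfl⟩⟩
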